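/- arXiv:1401.1140 — 5 statements merged into one kernel-verified Lean document; each statement's English description precedes it below -/
import Mathlib

section
/- Let B ∈ ℚ[[z]] be the formal power series satisfying B = z + z·B² (the generating function of binary trees counted by total number of nodes, B(z) = Σ_{n≥0} C_n z^{2n+1}). Then B satisfies the holonomic (linear differential) equation B(z) + (z − 4z³)·B′(z) = 2z, where B′ denotes the formal derivative. -/
open PowerSeries

/-- The generating function `B` of binary trees (counted by total number of nodes),
i.e. the formal power series satisfying `B = z + z·B²`, satisfies the holonomic
equation `B(z) + (z − 4z³)·B′(z) = 2z`. -/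
theorem binary_holonomic (B : PowerSeries ℚ)
    (hB : B = X + X * B ^ 2) :
    B + (X - 4 * X ^ 3) * (d⁄dX ℚ) B = 2 * X := by
  have hD : (d⁄dX ℚ) B = 1 + B ^ 2 + 2 * X * B * (d⁄dX ℚ) B := by
    have h := congrArg (d⁄dX ℚ) hB
    rw [map_add, Derivation.leibniz, Derivation.leibniz_pow, derivative_X] at h
    simp only [smul_eq_mul, nsmul_eq_mul, Nat.cast_ofNat, Nat.add_one_sub_one, pow_one] at h
    linear_combination h
  linear_combination (4 * X ^ 2 * (d⁄dX ℚ) B + 1 + 2 * X * B) * hB + X * (1 - 2 * X * B) * hD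
end

section
/- Let B ∈ ℚ[[z]] be the formal power series satisfying B = z + z·B², and define B• = z·B′ and B⋆ = B + B•, where B′ is the formal derivative. Then B⋆ = 2z + 4z²·B•. -/
open PowerSeries

/-- For the generating function `B` of binary trees (`B = z + z·B²`), with
`B• = z·B′` and `B⋆ = B + B•`, one has `B⋆ = 2z + 4z²·B•`. -/
theorem binary_pointed_identity (B : PowerSeries ℚ)
    (hB : B = X + X * B ^ 2) :
    B + X * (d⁄dX ℚ) B = 2 * X + 4 * X ^ 2 * (X * (d⁄dX ℚ) B) := by
  have hD : (d⁄dX ℚ) B = 1 + B ^ 2 + 2 * X * B * (d⁄dX ℚ) B := by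
    conv_lhs => rw [hB]
    simp only [map_add, Derivation.leibniz, Derivation.leibniz_pow, derivative_X, smul_eq_mul,
      nsmul_eq_mul]
    push_cast
    ring
  linear_combination (1 - 2 * X * B) * X * hD +
    (4 * X * (X * (d⁄dX ℚ) B) + 1 + 2 * X * B) * hB
end

section
/- Let M ∈ ℚ[[z]] be the formal power series satisfying M = z + z·M + z·M², and define M• = z·M′ and M⋆ = M + M•, where M′ is the formal derivative. Then M⋆ = 2z + z·M⋆ + z·M• + 3z²·M•. -/
open PowerSeries

/-- For the generating function `M` of Motzkin trees (`M = z + z·M + z·M²`), with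
`M• = z·M′` and `M⋆ = M + M•`, one has `M⋆ = 2z + z·M⋆ + z·M• + 3z²·M•`. -/
theorem motzkin_pointed_identity (M : PowerSeries ℚ)
    (hM : M = X + X * M + X * M ^ 2) :
    M + X * (d⁄dX ℚ) M =
      2 * X + X * (M + X * (d⁄dX ℚ) M) + X * (X * (d⁄dX ℚ) M)
        + 3 * X ^ 2 * (X * (d⁄dX ℚ) M) := by
  have hD : (d⁄dX ℚ) M = 1 + M + X * (d⁄dX ℚ) M + M ^ 2 + 2 * X * M * (d⁄dX ℚ) M := by
    have h := congrArg (d⁄dX ℚ) hM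
    simp only [map_add, Derivation.leibniz, Derivation.leibniz_pow, derivative_X,
      smul_eq_mul, nsmul_eq_mul] at h
    push_cast at h
    linear_combination h
  linear_combination X * (1 - X - 2 * X * M) * hD
    + (4 * X ^ 2 * (d⁄dX ℚ) M - (1 - X - 2 * X * M) + 2) * hM
end

section
/- The sum Σ_{k=1}^{n} k·C_k/4ᵏ is O(√n): there exists a constant c > 0 such that for all n ≥ 1, Σ_{k=1}^{n} k·C_k/4ᵏ ≤ c·√n. (This bounds the expected cost of a failed run of the rejection sampler, since the probability of failing at size 2k+1 is C_k/(2·4ᵏ) and a run failing at that size costs O(k).) -/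
theorem centralBinom_succ_div_four_pow (n : ℕ) :
    (Nat.centralBinom (n + 1) : ℝ) / 4 ^ (n + 1) =
      (2 * n + 1) / (2 * n + 2) * (Nat.centralBinom n / 4 ^ n) := by
  have h : ((n : ℝ) + 1) * Nat.centralBinom (n + 1) = 2 * (2 * n + 1) * Nat.centralBinom n :=
    mod_cast Nat.succ_mul_centralBinom_succ n
  rw [pow_succ]
  field_simp
  linear_combination 2 * h

theorem sum_centralBinom_div_four_pow (n : ℕ) :
    ∑ k ∈ Finset.range (n + 1), (Nat.centralBinom k : ℝ) / 4 ^ k =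
      (2 * n + 1) * (Nat.centralBinom n / 4 ^ n) := by
  induction n with
  | zero => simp
  | succ n ih =>
    rw [Finset.sum_range_succ, ih, centralBinom_succ_div_four_pow]
    push_cast
    field_simp

theorem mul_sq_centralBinom_div_four_pow_le_one (n : ℕ) :
    (2 * n + 1) * ((Nat.centralBinom n : ℝ) / 4 ^ n) ^ 2 ≤ 1 := by
  induction n with
  | zero => simp
  | succ n ih =>
    refine le_trans ?_ ih
    rw [centralBinom_succ_div_four_pow, mul_pow, ← mul_assoc]
    refine mul_le_mul_of_nonneg_right ?_ (sq_nonneg _)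
    push_cast
    rw [div_pow, mul_div_assoc', div_le_iff₀ (by positivity)]
    nlinarith [Nat.cast_nonneg (α := ℝ) n]

theorem mul_catalan_le_centralBinom (k : ℕ) : k * catalan k ≤ Nat.centralBinom k := by
  rw [← succ_mul_catalan_eq_centralBinom]
  exact Nat.mul_le_mul_right _ k.le_succ

/-- The sum `Σ_{k=1}^{n} k·Cₖ/4ᵏ` is `O(√n)`: there is a constant `c > 0` such that
for all `n ≥ 1`, `Σ_{k=1}^{n} k·Cₖ/4ᵏ ≤ c·√n`, where `Cₖ` is the `k`-th Catalan
number. -/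
theorem sum_catalan_bound :
    ∃ c : ℝ, 0 < c ∧ ∀ n : ℕ, 1 ≤ n →
      ∑ k ∈ Finset.Icc 1 n, (k * catalan k : ℝ) / 4 ^ k ≤ c * Real.sqrt n := by
  refine ⟨√3, by positivity, fun n hn => ?_⟩
  have hn' : (1 : ℝ) ≤ n := mod_cast hn
  calc ∑ k ∈ Finset.Icc 1 n, (k * catalan k : ℝ) / 4 ^ k
      ≤ ∑ k ∈ Finset.Icc 1 n, (Nat.centralBinom k : ℝ) / 4 ^ k := by
        gcongr with k
        exact mod_cast mul_catalan_le_centralBinom k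
    _ ≤ ∑ k ∈ Finset.range (n + 1), (Nat.centralBinom k : ℝ) / 4 ^ k := by
        refine Finset.sum_le_sum_of_subset_of_nonneg (fun k hk => ?_) fun _ _ _ => by positivity
        simp only [Finset.mem_Icc, Finset.mem_range] at *
        lia
    _ = (2 * n + 1) * (Nat.centralBinom n / 4 ^ n) := sum_centralBinom_div_four_pow n
    _ ≤ √(3 * n) := by
        refine Real.le_sqrt_of_sq_le ?_
        nlinarith [mul_sq_centralBinom_div_four_pow_le_one n]
    _ = √3 * √n := Real.sqrt_mul (by norm_num) _
end

section
/- (Core estimate of Theorem 2.) The average number of extra random bits consumed by the efficient binary-tree sampler satisfies Σ_{i=0}^{n−1} ⌊log₂(2i+1)⌋/(2i+2) = (log n)²/(4·log 2) + o((log n)²) as n → ∞, where log denotes the natural logarithm. Consequently the total expected number of random bits used by the sampler for a tree with 2n+1 nodes is 2n + (log n)²/(4·log 2) + o((log n)²). -/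
open Filter

open Asymptotics

/-- The floor `⌊log₂ (2n+1)⌋`, in natural-logarithm units, is within `log 2` of `log (n+1)`. -/
lemma log_succ_le_natLog_mul_log_two (n : ℕ) :
    Real.log (n + 1) ≤ Nat.log 2 (2 * n + 1) * Real.log 2 ∧
      Nat.log 2 (2 * n + 1) * Real.log 2 ≤ Real.log (n + 1) + Real.log 2 := by
  have hlow : 2 ^ Nat.log 2 (2 * n + 1) ≤ 2 * n + 1 := Nat.pow_log_le_self 2 (by omega)
  have hupp : 2 * n + 1 < 2 ^ (Nat.log 2 (2 * n + 1) + 1) :=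
    Nat.lt_pow_succ_log_self (by norm_num) _
  rw [pow_succ] at hupp
  have hn : (0 : ℝ) < n + 1 := by positivity
  rw [← Real.log_pow, ← Real.log_mul hn.ne' two_ne_zero]
  constructor
  · refine Real.log_le_log hn ?_
    exact_mod_cast (by omega : n + 1 ≤ 2 ^ Nat.log 2 (2 * n + 1))
  · refine Real.log_le_log (by positivity) ?_
    exact_mod_cast (by omega : 2 ^ Nat.log 2 (2 * n + 1) ≤ (n + 1) * 2)

lemma inv_succ_le_log_succ_sub_log {n : ℕ} (hn : 1 ≤ n) :
    1 / ((n : ℝ) + 1) ≤ Real.log (n + 1) - Real.log n ∧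
      Real.log (n + 1) - Real.log n ≤ 1 / (n : ℝ) := by
  have h0 : (0 : ℝ) < n := by exact_mod_cast hn
  rw [← Real.log_div (by positivity) h0.ne']
  constructor
  · have h := Real.one_sub_inv_le_log_of_pos (x := ((n : ℝ) + 1) / n) (by positivity)
    refine le_trans (le_of_eq ?_) h
    field_simp
    ring
  · have h := Real.log_le_sub_one_of_pos (x := ((n : ℝ) + 1) / n) (by positivity)
    refine h.trans (le_of_eq ?_)
    field_simp
    ring

/-- One summand matches the increment of `log ^ 2` up to a multiple of the increment of `log`. -/
lemma abs_summand_sub_log_sq_increment_le {n : ℕ} (hn : 1 ≤ n) :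
    |4 * Real.log 2 * ((Nat.log 2 (2 * n + 1) : ℝ) / (2 * n + 2))
        - (Real.log (n + 1) ^ 2 - Real.log n ^ 2)|
      ≤ 3 * (Real.log (n + 1) - Real.log n) := by
  obtain ⟨ha, hb⟩ := log_succ_le_natLog_mul_log_two n
  obtain ⟨hc, hd⟩ := inv_succ_le_log_succ_sub_log hn
  have h1 : (1 : ℝ) ≤ n := by exact_mod_cast hn
  have hk : 0 ≤ Real.log n := Real.log_nonneg h1
  have hl : Real.log (n + 1) ≤ n := by
    have := Real.log_le_sub_one_of_pos (x := (n : ℝ) + 1) (by positivity)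
    linarith
  have h2 : Real.log 2 ≤ 1 := by linarith [Real.log_two_lt_d9]
  have hn1 : 1 / (n : ℝ) ≤ 1 := by rw [div_le_one (by positivity)]; exact h1
  have hr : 1 / (n : ℝ) = 1 / ((n : ℝ) + 1) + 1 / (n : ℝ) * (1 / ((n : ℝ) + 1)) := by
    field_simp
  have hnn : (n : ℝ) * (1 / (n : ℝ)) = 1 := by field_simp
  have hrpos : 0 < 1 / ((n : ℝ) + 1) := by positivity
  have hqpos : 0 < 1 / (n : ℝ) := by positivity
  have hterm : 4 * Real.log 2 * ((Nat.log 2 (2 * n + 1) : ℝ) / (2 * n + 2))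
      = 2 * (Nat.log 2 (2 * n + 1) * Real.log 2) * (1 / ((n : ℝ) + 1)) := by
    field_simp
    ring
  rw [hterm]
  generalize (Nat.log 2 (2 * n + 1) * Real.log 2 : ℝ) = a at *
  generalize Real.log ((n : ℝ) + 1) = l at *
  generalize Real.log (n : ℝ) = k at *
  generalize 1 / ((n : ℝ) + 1) = r at *
  generalize 1 / (n : ℝ) = q at *
  rw [abs_le]
  constructor
  · have e1 : l * r ≤ a * r := by gcongr
    have e2 : (l - k) * (l + k) ≤ (l - k) * (2 * l) :=
      mul_le_mul_of_nonneg_left (by linarith) (by linarith)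
    have e3 : (l - k) * l ≤ (r + q * r) * l :=
      mul_le_mul_of_nonneg_right (by linarith) (by linarith)
    have e4 : l * (q * r) ≤ n * (q * r) := by gcongr
    have e5 : n * (q * r) = r := by rw [← mul_assoc, hnn, one_mul]
    nlinarith
  · have e1 : a * r ≤ (l + 1) * r := mul_le_mul_of_nonneg_right (by linarith) hrpos.le
    have e2 : r * (l + k) ≤ (l - k) * (l + k) :=
      mul_le_mul_of_nonneg_right hc (by linarith)
    have e3 : (l - k) * r ≤ 1 * r := mul_le_mul_of_nonneg_right (by linarith) hrpos.le
    nlinarith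

lemma abs_sum_sub_log_sq_le {n : ℕ} (hn : 1 ≤ n) :
    |4 * Real.log 2 * (∑ i ∈ Finset.range n, (Nat.log 2 (2 * i + 1) : ℝ) / (2 * i + 2))
        - Real.log n ^ 2| ≤ 3 * Real.log n := by
  induction n, hn using Nat.le_induction with
  | base => simp
  | succ n hn ih =>
    have h := abs_summand_sub_log_sq_increment_le hn
    rw [Finset.sum_range_succ, mul_add]
    push_cast
    rw [abs_le] at *
    constructor <;> linarith

lemma isLittleO_sum_sub_log_sq :
    (fun n : ℕ =>
        (∑ i ∈ Finset.range n, (Nat.log 2 (2 * i + 1) : ℝ) / (2 * i + 2))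
          - (Real.log n) ^ 2 / (4 * Real.log 2))
      =o[atTop] (fun n : ℕ => (Real.log n) ^ 2) := by
  have hlog : Tendsto (fun n : ℕ => Real.log n) atTop atTop :=
    Real.tendsto_log_atTop.comp tendsto_natCast_atTop_atTop
  have hsq : (fun n : ℕ => Real.log n) =o[atTop] (fun n : ℕ => (Real.log n) ^ 2) := by
    simpa [Function.comp_def] using
      (isLittleO_pow_pow_atTop_of_lt (𝕜 := ℝ) one_lt_two).comp_tendsto hlog
  refine IsBigO.trans_isLittleO (IsBigO.of_bound (3 / (4 * Real.log 2)) ?_) hsq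
  filter_upwards [eventually_ge_atTop 1] with n hn
  have h2 : 0 < 4 * Real.log 2 := by positivity
  have hk : 0 ≤ Real.log n := Real.log_natCast_nonneg n
  rw [Real.norm_eq_abs, Real.norm_of_nonneg hk, div_mul_eq_mul_div, le_div_iff₀ h2]
  nth_rewrite 2 [← abs_of_pos h2]
  rw [← abs_mul, sub_mul, div_mul_cancel₀ _ h2.ne', mul_comm]
  exact abs_sum_sub_log_sq_le hn

/-- (Core estimate of Theorem 2.)  The average number of extra random bits consumed
by the efficient binary-tree sampler satisfies
`Σ_{i=0}^{n−1} ⌊log₂(2i+1)⌋/(2i+2) = (log n)²/(4·log 2) + o((log n)²)` as `n → ∞`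
(`log` denotes the natural logarithm and `⌊log₂ m⌋ = Nat.log 2 m`).  Consequently the
total expected number of random bits used for a tree with `2n+1` nodes is
`2n + (log n)²/(4·log 2) + o((log n)²)`. -/
theorem expected_random_bits :
    (fun n : ℕ =>
        (∑ i ∈ Finset.range n, (Nat.log 2 (2 * i + 1) : ℝ) / (2 * i + 2))
          - (Real.log n) ^ 2 / (4 * Real.log 2))
      =o[atTop] (fun n : ℕ => (Real.log n) ^ 2)
    ∧ (fun n : ℕ =>
        (2 * n + ∑ i ∈ Finset.range n, (Nat.log 2 (2 * i + 1) : ℝ) / (2 * i + 2))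
          - (2 * n + (Real.log n) ^ 2 / (4 * Real.log 2)))
      =o[atTop] (fun n : ℕ => (Real.log n) ^ 2) := by
  refine ⟨isLittleO_sum_sub_log_sq, ?_⟩
  simpa only [add_sub_add_left_eq_sub] using isLittleO_sum_sub_log_sq
end
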